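/- A shift space X ⊆ 𝒜^∞ is d̄_M-stable if and only if for every ε > 0 there exist δ > 0 and N ∈ ℕ such that for every σ-invariant Borel probability measure ν on 𝒜^∞ and every n ≥ N, if ν(U_n(X)) > 1 − δ then inf_{μ ∈ M_σ(X)} d̄_M(ν, μ) < ε. -/

import Mathlib

open MeasureTheory Filter Topology

namespace DbarPaper

variable {A : Type} [Fintype A] [DecidableEq A] [Inhabited A]
  [TopologicalSpace A] [DiscreteTopology A]
  [MeasurableSpace A] [MeasurableSingletonClass A]

/-- The shift map on the full shift `𝒜^∞ = ℕ → A`. -/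
def shift : (ℕ → A) → (ℕ → A) := fun x n => x (n + 1)

/-- A shift space: a nonempty, closed, shift-invariant subset of the full shift. -/
def ShiftSpace (X : Set (ℕ → A)) : Prop :=
  X.Nonempty ∧ IsClosed X ∧ ∀ x ∈ X, shift x ∈ X

/-- The word `w` appears in the sequence `x`. -/
def occursIn (w : List A) (x : ℕ → A) : Prop :=
  ∃ i : ℕ, w = List.ofFn (fun k : Fin w.length => x (i + (k : ℕ)))

/-- The language of a set `X`: all finite words appearing in points of `X`. -/
def lang (X : Set (ℕ → A)) : Set (List A) := {w | ∃ x ∈ X, occursIn w x}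

/-- Words of length `n` in the language of `X`. -/
def langN (n : ℕ) (X : Set (ℕ → A)) : Set (List A) := {w | w ∈ lang X ∧ w.length = n}

/-- The pseudometric `d̄` on the full shift. -/
noncomputable def dbar (x y : ℕ → A) : ℝ :=
  Filter.limsup
    (fun n => (((Finset.range n).filter (fun j => x j ≠ y j)).card : ℝ) / (n : ℝ))
    Filter.atTop

/-- Hausdorff "distance" between two sets induced by a `ℝ`-valued distance. -/
noncomputable def hausdist {Z : Type*} (d : Z → Z → ℝ) (P Q : Set Z) : ℝ :=
  max (⨆ p : P, ⨅ q : Q, d p q) (⨆ q : Q, ⨅ p : P, d p q)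

/-- A probability measure is shift-invariant. -/
def invariantPM (μ : ProbabilityMeasure (ℕ → A)) : Prop :=
  (μ : Measure (ℕ → A)).map shift = (μ : Measure (ℕ → A))

/-- `M_σ(X)`: shift-invariant Borel probability measures giving `X` full measure. -/
def Msigma (X : Set (ℕ → A)) : Set (ProbabilityMeasure (ℕ → A)) :=
  {μ | invariantPM μ ∧ μ X = 1}

/-- `ξ` is a joining of `μ` and `ν`: a `σ×σ`-invariant measure on the product with
marginals `μ` and `ν`. -/
def IsJoining (ξ : Measure ((ℕ → A) × (ℕ → A))) (μ ν : ProbabilityMeasure (ℕ → A)) : Prop :=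
  ξ.map (Prod.map shift shift) = ξ ∧
  ξ.map Prod.fst = (μ : Measure (ℕ → A)) ∧ ξ.map Prod.snd = (ν : Measure (ℕ → A))

/-- Ornstein's metric `d̄_M` on invariant measures. -/
noncomputable def dbarM (μ ν : ProbabilityMeasure (ℕ → A)) : ℝ :=
  sInf {r : ℝ | ∃ ξ : Measure ((ℕ → A) × (ℕ → A)),
    IsJoining ξ μ ν ∧ r = (ξ {p | p.1 0 ≠ p.2 0}).toReal}

/-- `d̄_M`-stability of a shift space (Austin). -/
def DbarMStable (X : Set (ℕ → A)) : Prop :=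
  ∀ ε : ℝ, 0 < ε → ∃ U : Set (ProbabilityMeasure (ℕ → A)), IsOpen U ∧ Msigma X ⊆ U ∧
    ∀ ν ∈ U, invariantPM ν → ∃ μ ∈ Msigma X, dbarM μ ν < ε

/-- The infinite concatenation of a sequence of (nonempty) words. -/
def concatSeq (w : ℕ → List A) : ℕ → A := fun n =>
  ((List.ofFn (fun i : Fin (n + 1) => w (i : ℕ))).flatten).getD n default

/-- The `d̄`-shadowing property. -/
def DbarShadowing (X : Set (ℕ → A)) : Prop :=
  ∀ ε : ℝ, 0 < ε → ∃ N : ℕ, 0 < N ∧ ∀ w : ℕ → List A,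
    (∀ j, w j ∈ lang X) → (∀ j, N ≤ (w j).length) →
    ∃ x' ∈ X, dbar (concatSeq w) x' < ε

/-- `U_n(X)`: the union of cylinders of words of length `n` in the language of `X`. -/
def cylNbhd (X : Set (ℕ → A)) (n : ℕ) : Set (ℕ → A) :=
  {x | List.ofFn (fun k : Fin n => x (k : ℕ)) ∈ lang X}

/-- The `n`-th (topological) Markov approximation of `X`: all sequences whose subwords of
length `n+1` belong to the language of `X`. -/
def markovApprox (X : Set (ℕ → A)) (n : ℕ) : Set (ℕ → A) :=
  {x | ∀ i : ℕ, List.ofFn (fun k : Fin (n + 1) => x (i + (k : ℕ))) ∈ lang X}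

/-- Transitivity, in terms of the language. -/
def TransitiveShift (X : Set (ℕ → A)) : Prop :=
  ∀ u ∈ lang X, ∀ w ∈ lang X, ∃ v : List A, u ++ v ++ w ∈ lang X

/-- Topological mixing, in terms of the language. -/
def MixingShift (X : Set (ℕ → A)) : Prop :=
  ∀ u ∈ lang X, ∀ w ∈ lang X, ∃ N : ℕ, ∀ m : ℕ, N ≤ m →
    ∃ v : List A, v.length = m ∧ u ++ v ++ w ∈ lang X

/-- Chain mixing: all but finitely many Markov approximations are topologically mixing. -/
def ChainMixing (X : Set (ℕ → A)) : Prop :=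
  ∃ N : ℕ, ∀ n : ℕ, N ≤ n → MixingShift (markovApprox X n)

/-- `C` is the measure center of `X`: the smallest shift space contained in `X` of full
measure for every invariant measure of `X`. -/
def IsMeasureCenter (X C : Set (ℕ → A)) : Prop :=
  ShiftSpace C ∧ C ⊆ X ∧ (∀ μ ∈ Msigma X, μ C = 1) ∧
  ∀ Y : Set (ℕ → A), ShiftSpace Y → Y ⊆ X → (∀ μ ∈ Msigma X, μ Y = 1) → C ⊆ Y

/-- Measure of the cylinder determined by a word of length `n`. -/
noncomputable def cylMeasure (μ : ProbabilityMeasure (ℕ → A)) {n : ℕ} (w : Fin n → A) : ℝ :=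
  ((μ : Measure (ℕ → A)) {x | ∀ k : Fin n, x (k : ℕ) = w k}).toReal

/-- Entropy of the partition into cylinders of length `n`. -/
noncomputable def blockEntropy (μ : ProbabilityMeasure (ℕ → A)) (n : ℕ) : ℝ :=
  -∑ w : Fin n → A, cylMeasure μ w * Real.log (cylMeasure μ w)

/-- Kolmogorov–Sinai entropy of a shift-invariant measure. -/
noncomputable def ksEntropy (μ : ProbabilityMeasure (ℕ → A)) : ℝ :=
  Filter.limsup (fun n => blockEntropy μ n / (n : ℝ)) Filter.atTop

/-- `μ` is ergodic for the shift. -/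
def ErgodicPM (μ : ProbabilityMeasure (ℕ → A)) : Prop :=
  Ergodic shift (μ : Measure (ℕ → A))

/-- Ergodic measures are entropy dense in `M_σ(X)`. -/
def EntropyDense (X : Set (ℕ → A)) : Prop :=
  ∀ μ ∈ Msigma X, ∀ U : Set (ProbabilityMeasure (ℕ → A)), IsOpen U → μ ∈ U →
    ∀ ε : ℝ, 0 < ε →
      ∃ ν ∈ Msigma X, ν ∈ U ∧ ErgodicPM ν ∧ |ksEntropy ν - ksEntropy μ| < ε

/-- Topological entropy of a shift space. -/
noncomputable def topEntropy (X : Set (ℕ → A)) : ℝ :=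
  Filter.limsup (fun n => Real.log (Nat.card ↥(langN n X)) / (n : ℝ)) Filter.atTop

/-- The standard metric on the full shift. -/
noncomputable def rho (x y : ℕ → A) : ℝ :=
  open scoped Classical in
  if x = y then 0 else (2 : ℝ) ^ (-((sInf {j : ℕ | x j ≠ y j} : ℕ) : ℤ))

/-- Proximality of a shift space. -/
def ProximalShift (X : Set (ℕ → A)) : Prop :=
  ∀ x ∈ X, ∀ y ∈ X,
    Filter.liminf (fun n => rho (shift^[n] x) (shift^[n] y)) Filter.atTop = 0

/-- Minimality of a shift space. -/
def MinimalShift (X : Set (ℕ → A)) : Prop :=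
  ShiftSpace X ∧ ∀ Y : Set (ℕ → A), ShiftSpace Y → Y ⊆ X → Y = X

/-- An `A`-labeled directed multigraph on vertices `V` with edges `E`. -/
structure LabeledGraph (A V E : Type*) where
  src : E → V
  dst : E → V
  lab : E → A

namespace LabeledGraph

variable {A' V E : Type*}

/-- `es` is a path in `G` from `u` to `v`. -/
def PathFromTo (G : LabeledGraph A' V E) (es : List E) (u v : V) : Prop :=
  es.Chain' (fun e f => G.dst e = G.src f) ∧
  es.head?.map G.src = some u ∧ es.getLast?.map G.dst = some v

/-- `G` is strongly connected. -/
def StronglyConnected (G : LabeledGraph A' V E) : Prop :=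
  ∀ u v : V, ∃ es : List E, G.PathFromTo es u v

/-- `d` is the period of `G`: the gcd of lengths of closed paths. -/
def HasPeriod (G : LabeledGraph A' V E) (d : ℕ) : Prop :=
  (∀ (es : List E) (u : V), G.PathFromTo es u u → d ∣ es.length) ∧
  ∀ d' : ℕ, (∀ (es : List E) (u : V), G.PathFromTo es u u → d' ∣ es.length) → d' ∣ d

/-- `b` is a safe symbol for `G`. -/
def SafeSymbol (G : LabeledGraph A' V E) (b : A') : Prop :=
  ∀ e : E, ∃ e' : E, G.src e' = G.src e ∧ G.dst e' = G.dst e ∧ G.lab e' = b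

/-- The shift space presented by the labeled graph `G`: labels read along infinite paths. -/
def presents (G : LabeledGraph A' V E) : Set (ℕ → A') :=
  {x | ∃ e : ℕ → E, (∀ j, G.dst (e j) = G.src (e (j + 1))) ∧ ∀ j, x j = G.lab (e j)}

end LabeledGraph

/-- The coupling of a family of labeled graphs: an edge labeled `a` from `v` to `v'` exists
iff each `G k` has an edge from `v k` to `v' k` labeled `a`. -/
def coupling {A' : Type*} {n : ℕ} {V E : Fin n → Type*}
    (G : ∀ k, LabeledGraph A' (V k) (E k)) :
    LabeledGraph A' (∀ k, V k) {p : (∀ k, E k) × A' // ∀ k, (G k).lab (p.1 k) = p.2} where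
  src p := fun k => (G k).src (p.1.1 k)
  dst p := fun k => (G k).dst (p.1.1 k)
  lab p := p.1.2

/-- Sofic shift spaces: those presented by some finite labeled graph. -/
def Sofic (X : Set (ℕ → A)) : Prop :=
  ∃ (V E : Type) (_ : Fintype V) (_ : Fintype E) (G : LabeledGraph A V E),
    X = G.presents

/-- The coded shift generated by a finite set of words `B`: the closure of the set of all
shifts of infinite concatenations of words from `B`. -/
def codedShift (B : Finset (List A)) : Set (ℕ → A) :=
  closure {x | ∃ (b : ℕ → List A) (k : ℕ), (∀ i, b i ∈ B) ∧ x = shift^[k] (concatSeq b)}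


omit [Fintype A] [DecidableEq A] [Inhabited A] [DiscreteTopology A] [MeasurableSpace A]
  [MeasurableSingletonClass A] in
lemma continuous_shift : Continuous (shift : (ℕ → A) → (ℕ → A)) :=
  continuous_pi fun n => continuous_apply (n + 1)

omit [Fintype A] [DecidableEq A] [Inhabited A] [MeasurableSpace A]
  [MeasurableSingletonClass A] in
lemma isClopen_cylNbhd (X : Set (ℕ → A)) (n : ℕ) : IsClopen (cylNbhd X n) := by
  have hc : Continuous fun (x : ℕ → A) (k : Fin n) => x (k : ℕ) :=
    continuous_pi fun k => continuous_apply (k : ℕ)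
  exact (isClopen_discrete {w : Fin n → A | List.ofFn w ∈ lang X}).preimage hc

omit [Fintype A] [DecidableEq A] [Inhabited A] [TopologicalSpace A] [DiscreteTopology A]
  [MeasurableSpace A] [MeasurableSingletonClass A] in
lemma ofFn_mem_lang_iff {X : Set (ℕ → A)} {n : ℕ} {w : Fin n → A} :
    List.ofFn w ∈ lang X ↔ ∃ x ∈ X, ∃ i : ℕ, ∀ k : Fin n, w k = x (i + k) := by
  refine exists_congr fun x => and_congr_right fun _ => exists_congr fun i => ?_
  rw [List.ext_get_iff]
  simp only [List.length_ofFn, List.get_eq_getElem, List.getElem_ofFn, true_and]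
  exact ⟨fun h k => h k k.2 k.2, fun h k hk _ => h ⟨k, hk⟩⟩

omit [Fintype A] [DecidableEq A] [Inhabited A] [TopologicalSpace A] [DiscreteTopology A]
  [MeasurableSpace A] [MeasurableSingletonClass A] in
lemma mem_cylNbhd_iff {X : Set (ℕ → A)} {n : ℕ} {x : ℕ → A} :
    x ∈ cylNbhd X n ↔ ∃ y ∈ X, ∃ i : ℕ, ∀ k < n, x k = y (i + k) :=
  ofFn_mem_lang_iff.trans <| exists_congr fun _ => and_congr_right fun _ =>
    exists_congr fun _ => ⟨fun h k hk => h ⟨k, hk⟩, fun h k => h k k.2⟩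

omit [Fintype A] [DecidableEq A] [Inhabited A] [TopologicalSpace A] [DiscreteTopology A]
  [MeasurableSpace A] [MeasurableSingletonClass A] in
lemma antitone_cylNbhd (X : Set (ℕ → A)) : Antitone (cylNbhd X) := by
  intro m n hmn x hx
  obtain ⟨y, hy, i, h⟩ := mem_cylNbhd_iff.1 hx
  exact mem_cylNbhd_iff.2 ⟨y, hy, i, fun k hk => h k (hk.trans_le hmn)⟩

omit [Fintype A] [DecidableEq A] [Inhabited A] [TopologicalSpace A] [DiscreteTopology A]
  [MeasurableSpace A] [MeasurableSingletonClass A] in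
lemma subset_cylNbhd (X : Set (ℕ → A)) (n : ℕ) : X ⊆ cylNbhd X n :=
  fun x hx => mem_cylNbhd_iff.2 ⟨x, hx, 0, fun k _ => by simp⟩

omit [Fintype A] [DecidableEq A] [Inhabited A] [TopologicalSpace A] [DiscreteTopology A]
  [MeasurableSpace A] [MeasurableSingletonClass A] in
lemma shift_iterate_apply (x : ℕ → A) (i k : ℕ) : shift^[i] x k = x (i + k) := by
  induction i generalizing x with
  | zero => simp
  | succ i ih => rw [Function.iterate_succ_apply, ih, shift, Nat.add_right_comm]

omit [Fintype A] [DecidableEq A] [Inhabited A] [DiscreteTopology A] [MeasurableSpace A]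
  [MeasurableSingletonClass A] in
lemma iInter_cylNbhd {X : Set (ℕ → A)} (hX : ShiftSpace X) : ⋂ n, cylNbhd X n = X := by
  refine (Set.subset_iInter (subset_cylNbhd X)).antisymm' fun x hx => ?_
  have hx' : ∀ n, ∃ z ∈ X, ∀ k < n, z k = x k := fun n => by
    obtain ⟨y, hy, i, h⟩ := mem_cylNbhd_iff.1 (Set.mem_iInter.1 hx n)
    exact ⟨shift^[i] y, Set.MapsTo.iterate (s := X) hX.2.2 i hy, fun k hk => by
      rw [shift_iterate_apply, h k hk]⟩
  choose z hz hzx using hx'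
  refine hX.2.1.mem_of_tendsto (b := atTop) (tendsto_pi_nhds.2 fun k => ?_) (Eventually.of_forall hz)
  refine tendsto_const_nhds.congr' ?_
  filter_upwards [eventually_gt_atTop k] with n hn using (hzx n k hn).symm

omit [DecidableEq A] [Inhabited A] in
lemma isClosed_invariantPM : IsClosed {ν : ProbabilityMeasure (ℕ → A) | invariantPM ν} := by
  have h : {ν : ProbabilityMeasure (ℕ → A) | invariantPM ν} =
      {ν | ν.map continuous_shift.measurable.aemeasurable = ν} := by
    ext ν
    exact (Subtype.ext_iff (a1 := ν.map continuous_shift.measurable.aemeasurable)).symm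
  rw [h]
  exact isClosed_eq (ProbabilityMeasure.continuous_map continuous_shift) continuous_id

omit [DecidableEq A] [Inhabited A] in
lemma continuous_apply_of_isClopen {E : Set (ℕ → A)} (hE : IsClopen E) :
    Continuous fun ν : ProbabilityMeasure (ℕ → A) => ((ν E : NNReal) : ℝ) :=
  NNReal.continuous_coe.comp <| continuous_iff_continuousAt.2 fun _ =>
    ProbabilityMeasure.tendsto_measure_of_isClopen_of_tendsto tendsto_id hE

omit [Fintype A] [DecidableEq A] [Inhabited A] [TopologicalSpace A] [DiscreteTopology A]
  [MeasurableSingletonClass A] in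
lemma IsJoining.swap {ξ : Measure ((ℕ → A) × (ℕ → A))} {μ ν : ProbabilityMeasure (ℕ → A)}
    (h : IsJoining ξ μ ν) : IsJoining (ξ.map Prod.swap) ν μ := by
  have hs : Measurable (shift : (ℕ → A) → (ℕ → A)) :=
    measurable_pi_lambda _ fun n => measurable_pi_apply (n + 1)
  refine ⟨?_, ?_, ?_⟩
  · rw [Measure.map_map (hs.prodMap hs) measurable_swap]
    conv_rhs => rw [← h.1, Measure.map_map measurable_swap (hs.prodMap hs)]
    rfl
  · rw [Measure.map_map measurable_fst measurable_swap]
    exact h.2.2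
  · rw [Measure.map_map measurable_snd measurable_swap]
    exact h.2.1

omit [DecidableEq A] [Inhabited A] [TopologicalSpace A] [DiscreteTopology A] in
lemma dbarM_comm (μ ν : ProbabilityMeasure (ℕ → A)) : dbarM μ ν = dbarM ν μ := by
  have key : ∀ μ ν : ProbabilityMeasure (ℕ → A), ∀ r : ℝ,
      (∃ ξ, IsJoining ξ μ ν ∧ r = (ξ {p | p.1 0 ≠ p.2 0}).toReal) →
        ∃ ξ, IsJoining ξ ν μ ∧ r = (ξ {p | p.1 0 ≠ p.2 0}).toReal := by
    rintro μ ν r ⟨ξ, hξ, rfl⟩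
    refine ⟨_, hξ.swap, ?_⟩
    have hm : Measurable (Prod.swap : (ℕ → A) × (ℕ → A) → _) := measurable_swap
    have he : MeasurableSet {p : (ℕ → A) × (ℕ → A) | p.1 0 ≠ p.2 0} :=
      (measurableSet_eq_fun ((measurable_pi_apply 0).comp measurable_fst)
        ((measurable_pi_apply 0).comp measurable_snd)).compl
    rw [Measure.map_apply hm he]
    simp [Set.preimage, ne_comm]
  exact congrArg sInf (Set.ext fun r => ⟨key μ ν r, key ν μ r⟩)

omit [Fintype A] [DecidableEq A] [Inhabited A] [TopologicalSpace A] [DiscreteTopology A]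
  [MeasurableSingletonClass A] in
lemma dbarM_nonneg (μ ν : ProbabilityMeasure (ℕ → A)) : 0 ≤ dbarM μ ν :=
  Real.sInf_nonneg (by rintro _ ⟨ξ, -, rfl⟩; exact ENNReal.toReal_nonneg)

omit [DecidableEq A] [Inhabited A] in
/-- Every neighborhood of `M_σ(X)` contains all invariant measures for which some `U_n(X)` with
`n` large has measure close to one. -/
lemma exists_forall_mem_of_isOpen {X : Set (ℕ → A)} (hX : ShiftSpace X)
    {U : Set (ProbabilityMeasure (ℕ → A))} (hU : IsOpen U) (hXU : Msigma X ⊆ U) :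
    ∃ (δ : ℝ) (N : ℕ), 0 < δ ∧ 0 < N ∧ ∀ ν : ProbabilityMeasure (ℕ → A), invariantPM ν →
      ∀ n : ℕ, N ≤ n → 1 - δ < ((ν (cylNbhd X n) : NNReal) : ℝ) → ν ∈ U := by
  by_contra! hcon
  let F : ℕ → Set (ProbabilityMeasure (ℕ → A)) := fun m =>
    ({ν | invariantPM ν} ∩ Uᶜ) ∩ {ν | 1 - 1 / ((m : ℝ) + 1) ≤ ((ν (cylNbhd X m) : NNReal) : ℝ)}
  have hFcl : ∀ m, IsClosed (F m) := fun m =>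
    (isClosed_invariantPM.inter hU.isClosed_compl).inter
      (isClosed_le continuous_const (continuous_apply_of_isClopen (isClopen_cylNbhd X m)))
  have hmono : ∀ ν : ProbabilityMeasure (ℕ → A), ∀ {m n : ℕ}, m ≤ n →
      ((ν (cylNbhd X n) : NNReal) : ℝ) ≤ ((ν (cylNbhd X m) : NNReal) : ℝ) := fun ν m n hmn =>
    NNReal.coe_le_coe.2 (ν.apply_mono (antitone_cylNbhd X hmn))
  have hFne : ∀ m, (F m).Nonempty := fun m => by
    obtain ⟨ν, hν, n, hn, hlt, hνU⟩ := hcon (1 / ((m : ℝ) + 1)) (m + 1) (by positivity) m.succ_pos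
    exact ⟨ν, ⟨hν, hνU⟩, hlt.le.trans (hmono ν (by lia))⟩
  have hFanti : ∀ m, F (m + 1) ⊆ F m := fun m ν hν => by
    refine ⟨hν.1, le_trans ?_ (hν.2.trans (hmono ν m.le_succ))⟩
    have := Nat.one_div_le_one_div (α := ℝ) m.le_succ
    push_cast at this ⊢
    linarith
  obtain ⟨ν, hν⟩ := IsCompact.nonempty_iInter_of_sequence_nonempty_isCompact_isClosed F hFanti hFne
    (hFcl 0).isCompact hFcl
  have hν : ∀ m, ν ∈ F m := Set.mem_iInter.1 hν
  refine (hν 0).1.2 (hXU ⟨(hν 0).1.1, ?_⟩)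
  have hfull : ∀ n, ν (cylNbhd X n) = 1 := fun n => by
    refine le_antisymm (ν.apply_le_one _) (NNReal.coe_le_coe.1 ?_)
    have hlim : Tendsto (fun m : ℕ => 1 - 1 / ((m : ℝ) + 1)) atTop (𝓝 (1 - 0)) :=
      tendsto_const_nhds.sub tendsto_one_div_add_atTop_nhds_zero_nat
    rw [sub_zero] at hlim
    refine le_of_tendsto hlim ?_
    filter_upwards [eventually_ge_atTop n] with m hm using (hν m).2.trans (hmono ν hm)
  have hae : ∀ᵐ x ∂(ν : Measure (ℕ → A)), x ∈ ⋂ n, cylNbhd X n := by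
    simp only [Set.mem_iInter]
    refine ae_all_iff.2 fun n => ?_
    have h1 : (ν : Measure (ℕ → A)) (cylNbhd X n) = 1 := by
      rw [← ProbabilityMeasure.ennreal_coeFn_eq_coeFn_toMeasure, hfull n, ENNReal.coe_one]
    exact (prob_compl_eq_zero_iff (isClopen_cylNbhd X n).isOpen.measurableSet).2 h1
  rw [iInter_cylNbhd hX] at hae
  have h1 : (ν : Measure (ℕ → A)) X = 1 :=
    (prob_compl_eq_zero_iff hX.2.1.measurableSet).1 hae
  rwa [← ProbabilityMeasure.ennreal_coeFn_eq_coeFn_toMeasure, ENNReal.coe_eq_one] at h1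

/-- A shift space `X` is `d̄_M`-stable iff for every `ε > 0` there exist
`δ > 0` and `N ∈ ℕ` such that for every shift-invariant probability measure `ν` and every
`n ≥ N`, if `ν(U_n(X)) > 1 − δ` then `inf_{μ ∈ M_σ(X)} d̄_M(ν, μ) < ε`. -/
theorem statement0 (hA : 2 ≤ Fintype.card A) (X : Set (ℕ → A)) (hX : ShiftSpace X) :
    DbarMStable X ↔
      ∀ ε : ℝ, 0 < ε → ∃ (δ : ℝ) (N : ℕ), 0 < δ ∧ 0 < N ∧
        ∀ ν : ProbabilityMeasure (ℕ → A), invariantPM ν → ∀ n : ℕ, N ≤ n →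
          1 - δ < ((ν (cylNbhd X n) : NNReal) : ℝ) →
          sInf {r : ℝ | ∃ μ ∈ Msigma X, r = dbarM ν μ} < ε := by
  constructor
  · intro h ε hε
    obtain ⟨U, hU, hXU, hstab⟩ := h ε hε
    obtain ⟨δ, N, hδ, hN, hmem⟩ := exists_forall_mem_of_isOpen hX hU hXU
    refine ⟨δ, N, hδ, hN, fun ν hν n hn hlt => ?_⟩
    obtain ⟨μ, hμ, hμν⟩ := hstab ν (hmem ν hν n hn hlt) hν
    refine lt_of_le_of_lt (csInf_le ⟨0, ?_⟩ ⟨μ, hμ, rfl⟩) (dbarM_comm μ ν ▸ hμν)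
    rintro _ ⟨μ', -, rfl⟩
    exact dbarM_nonneg ν μ'
  · intro h ε hε
    obtain ⟨δ, N, hδ, -, hclose⟩ := h ε hε
    rcases (Msigma X).eq_empty_or_nonempty with hempty | ⟨μ₀, hμ₀⟩
    · exact ⟨∅, isOpen_empty, hempty.subset, fun _ hν => hν.elim⟩
    refine ⟨{ν | 1 - δ < ((ν (cylNbhd X N) : NNReal) : ℝ)},
      isOpen_lt continuous_const (continuous_apply_of_isClopen (isClopen_cylNbhd X N)),
      fun μ hμ => ?_, fun ν hνU hν => ?_⟩
    · have h1 : (1 : ℝ) ≤ ((μ (cylNbhd X N) : NNReal) : ℝ) :=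
        NNReal.one_le_coe.2 (hμ.2.symm.trans_le (μ.apply_mono (subset_cylNbhd X N)))
      exact (sub_lt_self 1 hδ).trans_le h1
    · obtain ⟨_, ⟨μ, hμ, rfl⟩, hlt⟩ :=
        exists_lt_of_csInf_lt (by exact ⟨_, μ₀, hμ₀, rfl⟩) (hclose ν hν N le_rfl hνU)
      exact ⟨μ, hμ, dbarM_comm ν μ ▸ hlt⟩

end DbarPaper
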